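/- Let L be a linear map from 3×3 real matrices to 3×3 real matrices that is equivariant under rotations, i.e., L(R Π Rᵀ) = R L(Π) Rᵀ for every R ∈ SO(3) and every 3×3 real matrix Π. Then there exist real constants η_V, η_r, η such that for every Π, L(Π) = η_V · ((1/3) tr Π)·I + η_r · (Π − Πᵀ)/2 + η · ((Π + Πᵀ)/2 − ((1/3) tr Π)·I). In particular, any rotation-equivariant linear relation between the pressure tensor and the velocity gradient is given by exactly three scalar coefficients (bulk, rotational, and shear viscosities), one on each irreducible component. -/

import Mathlib

/-!
The finite group of rotations of the cube, together with one rotation outside it, already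
determines `L`. Write `E i j` for the matrix units (`unit i j` below).

* Half-turns about the coordinate axes multiply `E i j` by signs, and comparing signs forces
  `L (E 0 0)` to be diagonal and `L (E 0 1)` to lie in the span of `E 0 1` and `E 1 0`.
  A quarter-turn about the first axis fixes `E 0 0`, so `L (E 0 0) = diag (p, q, q)`;
  write `L (E 0 1) = a • E 0 1 + b • E 1 0`.
* The quarter-turn about the third axis carries `E 0 1` to `-E 1 0`, and the cyclic permutation
  of the axes carries `E i j` to `E (i+1) (j+1)`; so `p, q, a, b` determine `L` on all matrix units.
* A rotation mixing the first two axes (the 3-4-5 one, to stay rational) gives `p = q + a + b`.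

Hence `L P = q (tr P) 1 + a P + b Pᵀ`, which is the claim with `ηV = 3 q + a + b`, `ηr = a - b`
and `η = a + b`.
-/

open Matrix

/-- `unit i j` is the matrix unit with its single `1` in row `i` and column `j`. -/
def unit (i j : Fin 3) : Matrix (Fin 3) (Fin 3) ℝ :=
  Matrix.of fun r c => if r = i ∧ c = j then 1 else 0

/-- The half-turn about the first axis. -/
def halfTurn₀ : Matrix (Fin 3) (Fin 3) ℝ := !![1, 0, 0; 0, -1, 0; 0, 0, -1]

/-- The half-turn about the third axis. -/
def halfTurn₂ : Matrix (Fin 3) (Fin 3) ℝ := !![-1, 0, 0; 0, -1, 0; 0, 0, 1]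

/-- The quarter-turn about the first axis. -/
def quarterTurn₀ : Matrix (Fin 3) (Fin 3) ℝ := !![1, 0, 0; 0, 0, -1; 0, 1, 0]

/-- The quarter-turn about the third axis. -/
def quarterTurn₂ : Matrix (Fin 3) (Fin 3) ℝ := !![0, -1, 0; 1, 0, 0; 0, 0, 1]

/-- The rotation permuting the coordinate axes cyclically. -/
def axisCycle : Matrix (Fin 3) (Fin 3) ℝ := !![0, 0, 1; 1, 0, 0; 0, 1, 0]

/-- The rotation about the third axis by the angle with cosine `3/5` and sine `4/5`. -/
noncomputable def tilt : Matrix (Fin 3) (Fin 3) ℝ := !![3/5, -4/5, 0; 4/5, 3/5, 0; 0, 0, 1]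

/-- The equivariance hypothesis for a single rotation `R`. -/
def Commutes (L : Matrix (Fin 3) (Fin 3) ℝ →ₗ[ℝ] Matrix (Fin 3) (Fin 3) ℝ)
    (R : Matrix (Fin 3) (Fin 3) ℝ) : Prop :=
  ∀ P : Matrix (Fin 3) (Fin 3) ℝ, L (R * P * Rᵀ) = R * L P * Rᵀ

lemma unit_apply (i j r c : Fin 3) : unit i j r c = if r = i ∧ c = j then 1 else 0 := rfl

lemma conj_apply (R P : Matrix (Fin 3) (Fin 3) ℝ) (r c : Fin 3) :
    (R * P * Rᵀ) r c = ∑ k, (∑ l, R r l * P l k) * R c k := by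
  simp [Matrix.mul_apply]

lemma sum_unit (P : Matrix (Fin 3) (Fin 3) ℝ) : P = ∑ i, ∑ j, P i j • unit i j := by
  ext r c
  fin_cases r <;> fin_cases c <;> simp [Fin.sum_univ_three, unit_apply]

lemma axisCycle_conj_unit (i j : Fin 3) :
    axisCycle * unit i j * axisCycleᵀ = unit (i + 1) (j + 1) := by
  ext r c
  rw [conj_apply]
  fin_cases i <;> fin_cases j <;> fin_cases r <;> fin_cases c <;>
    simp [unit_apply, axisCycle, Fin.sum_univ_three]

lemma map_unit_diag {L : Matrix (Fin 3) (Fin 3) ℝ →ₗ[ℝ] Matrix (Fin 3) (Fin 3) ℝ}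
    (h₀ : Commutes L halfTurn₀)
    (h₂ : Commutes L halfTurn₂) (q₀ : Commutes L quarterTurn₀) :
    ∃ p q : ℝ, L (unit 0 0) = !![p, 0, 0; 0, q, 0; 0, 0, q] := by
  have e₀ : halfTurn₀ * unit 0 0 * halfTurn₀ᵀ = unit 0 0 := by
    ext r c
    rw [conj_apply]
    fin_cases r <;> fin_cases c <;> simp [unit_apply, halfTurn₀, Fin.sum_univ_three]
  have e₂ : halfTurn₂ * unit 0 0 * halfTurn₂ᵀ = unit 0 0 := by
    ext r c
    rw [conj_apply]
    fin_cases r <;> fin_cases c <;> simp [unit_apply, halfTurn₂, Fin.sum_univ_three]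
  have eq : quarterTurn₀ * unit 0 0 * quarterTurn₀ᵀ = unit 0 0 := by
    ext r c
    rw [conj_apply]
    fin_cases r <;> fin_cases c <;> simp [unit_apply, quarterTurn₀, Fin.sum_univ_three]
  have a₀ := h₀ (unit 0 0)
  have a₂ := h₂ (unit 0 0)
  have aq := q₀ (unit 0 0)
  rw [e₀] at a₀
  rw [e₂] at a₂
  rw [eq] at aq
  generalize L (unit 0 0) = M at a₀ a₂ aq
  refine ⟨M 0 0, M 1 1, ?_⟩
  have b₀ := fun i j => (congrFun (congrFun a₀ i) j).trans (conj_apply _ _ i j)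
  have b₂ := fun i j => (congrFun (congrFun a₂ i) j).trans (conj_apply _ _ i j)
  have bq := (congrFun (congrFun aq 2) 2).trans (conj_apply _ _ 2 2)
  simp [Fin.forall_fin_succ, halfTurn₀, halfTurn₂, quarterTurn₀, Fin.sum_univ_three] at b₀ b₂ bq
  ext r c
  fin_cases r <;> fin_cases c <;> simp <;> linarith

lemma map_unit_offDiag {L : Matrix (Fin 3) (Fin 3) ℝ →ₗ[ℝ] Matrix (Fin 3) (Fin 3) ℝ}
    (h₀ : Commutes L halfTurn₀)
    (h₂ : Commutes L halfTurn₂) :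
    ∃ a b : ℝ, L (unit 0 1) = a • unit 0 1 + b • unit 1 0 := by
  have e₀ : halfTurn₀ * unit 0 1 * halfTurn₀ᵀ = -unit 0 1 := by
    ext r c
    rw [conj_apply]
    fin_cases r <;> fin_cases c <;> simp [unit_apply, halfTurn₀, Fin.sum_univ_three]
  have e₂ : halfTurn₂ * unit 0 1 * halfTurn₂ᵀ = unit 0 1 := by
    ext r c
    rw [conj_apply]
    fin_cases r <;> fin_cases c <;> simp [unit_apply, halfTurn₂, Fin.sum_univ_three]
  have a₀ := h₀ (unit 0 1)
  have a₂ := h₂ (unit 0 1)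
  rw [e₀, map_neg] at a₀
  rw [e₂] at a₂
  generalize L (unit 0 1) = M at a₀ a₂
  refine ⟨M 0 1, M 1 0, ?_⟩
  have b₀ := fun i j => (congrFun (congrFun a₀ i) j).trans (conj_apply _ _ i j)
  have b₂ := fun i j => (congrFun (congrFun a₂ i) j).trans (conj_apply _ _ i j)
  simp [Fin.forall_fin_succ, halfTurn₀, halfTurn₂, Fin.sum_univ_three] at b₀ b₂
  ext r c
  fin_cases r <;> fin_cases c <;> simp [unit_apply] <;> linarith

lemma map_unit_one_zero {L : Matrix (Fin 3) (Fin 3) ℝ →ₗ[ℝ] Matrix (Fin 3) (Fin 3) ℝ}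
    (hq : Commutes L quarterTurn₂) {a b : ℝ}
    (h : L (unit 0 1) = a • unit 0 1 + b • unit 1 0) :
    L (unit 1 0) = a • unit 1 0 + b • unit 0 1 := by
  have e : quarterTurn₂ * unit 0 1 * quarterTurn₂ᵀ = -unit 1 0 := by
    ext r c
    rw [conj_apply]
    fin_cases r <;> fin_cases c <;> simp [unit_apply, quarterTurn₂, Fin.sum_univ_three]
  have e' : quarterTurn₂ * unit 1 0 * quarterTurn₂ᵀ = -unit 0 1 := by
    ext r c
    rw [conj_apply]
    fin_cases r <;> fin_cases c <;> simp [unit_apply, quarterTurn₂, Fin.sum_univ_three]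
  have k := hq (unit 0 1)
  rw [e, map_neg, h, mul_add, add_mul, mul_smul_comm, mul_smul_comm, smul_mul_assoc,
    smul_mul_assoc, e, e'] at k
  rw [← neg_neg (L (unit 1 0)), k]
  simp [add_comm]

lemma map_unit_succ {L : Matrix (Fin 3) (Fin 3) ℝ →ₗ[ℝ] Matrix (Fin 3) (Fin 3) ℝ}
    (hc : Commutes L axisCycle) {a b : ℝ} {i j : Fin 3}
    (h : L (unit i j) = a • unit i j + b • unit j i) :
    L (unit (i + 1) (j + 1)) = a • unit (i + 1) (j + 1) + b • unit (j + 1) (i + 1) := by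
  rw [← axisCycle_conj_unit i j, hc, h, mul_add, add_mul, mul_smul_comm, mul_smul_comm,
    smul_mul_assoc, smul_mul_assoc, axisCycle_conj_unit j i]

lemma map_unit_diag_succ {L : Matrix (Fin 3) (Fin 3) ℝ →ₗ[ℝ] Matrix (Fin 3) (Fin 3) ℝ}
    (hc : Commutes L axisCycle) {q s : ℝ} {i : Fin 3}
    (h : L (unit i i) = q • 1 + s • unit i i) :
    L (unit (i + 1) (i + 1)) = q • 1 + s • unit (i + 1) (i + 1) := by
  have e : axisCycle * axisCycleᵀ = 1 := by
    ext r c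
    fin_cases r <;> fin_cases c <;> simp [axisCycle, Matrix.mul_apply, Fin.sum_univ_three]
  rw [← axisCycle_conj_unit i i, hc, h, mul_add, add_mul, mul_smul_comm, mul_smul_comm,
    smul_mul_assoc, smul_mul_assoc, mul_one, e]

/-- The `(0, 1)` entry of equivariance under `tilt`, which ties the diagonal coefficients to the
off-diagonal ones. -/
lemma diag_coeff_eq {L : Matrix (Fin 3) (Fin 3) ℝ →ₗ[ℝ] Matrix (Fin 3) (Fin 3) ℝ}
    (ht : Commutes L tilt) {p q a b : ℝ}
    (hd : L (unit 0 0) = !![p, 0, 0; 0, q, 0; 0, 0, q])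
    (hd₁ : L (unit 1 1) 0 1 = 0)
    (h01 : L (unit 0 1) = a • unit 0 1 + b • unit 1 0)
    (h10 : L (unit 1 0) = a • unit 1 0 + b • unit 0 1) :
    p = q + (a + b) := by
  have e : tilt * unit 0 0 * tiltᵀ = (9/25 : ℝ) • unit 0 0 + (12/25 : ℝ) • unit 0 1
      + (12/25 : ℝ) • unit 1 0 + (16/25 : ℝ) • unit 1 1 := by
    ext r c
    rw [conj_apply]
    fin_cases r <;> fin_cases c <;>
      simp [unit_apply, tilt, Fin.sum_univ_three] <;> norm_num
  have k := ht (unit 0 0)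
  rw [e] at k
  simp only [map_add, map_smul] at k
  have k' := (congrFun (congrFun k 0) 1).trans (conj_apply _ _ 0 1)
  rw [hd, h01, h10] at k'
  simp [hd₁, tilt, unit_apply, Fin.sum_univ_three] at k'
  linarith

/-- Every linear map on real 3×3 matrices that is equivariant under
the conjugation action of SO(3) acts as a scalar on each of the three
irreducible components: there exist constants η_V, η_r, η (bulk, rotational and
shear viscosities) such that
L(Π) = η_V · ((1/3) tr Π)·I + η_r · (Π − Πᵀ)/2 + η · ((Π + Πᵀ)/2 − ((1/3) tr Π)·I). -/
theorem equivariant_linear_map_three_coefficients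
    (L : Matrix (Fin 3) (Fin 3) ℝ →ₗ[ℝ] Matrix (Fin 3) (Fin 3) ℝ)
    (hL : ∀ R : Matrix (Fin 3) (Fin 3) ℝ, Rᵀ * R = 1 → R.det = 1 →
      ∀ P : Matrix (Fin 3) (Fin 3) ℝ, L (R * P * Rᵀ) = R * L P * Rᵀ) :
    ∃ ηV ηr η : ℝ, ∀ P : Matrix (Fin 3) (Fin 3) ℝ,
      L P = ηV • (((1 / 3) * P.trace) • (1 : Matrix (Fin 3) (Fin 3) ℝ))
        + ηr • ((1 / 2 : ℝ) • (P - Pᵀ))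
        + η • ((1 / 2 : ℝ) • (P + Pᵀ) - ((1 / 3) * P.trace) • 1) := by
  have h₀ : Commutes L halfTurn₀ := hL _
    (by ext r c; fin_cases r <;> fin_cases c <;>
          simp [halfTurn₀, Matrix.mul_apply, Fin.sum_univ_three])
    (by simp [halfTurn₀, Matrix.det_fin_three])
  have h₂ : Commutes L halfTurn₂ := hL _
    (by ext r c; fin_cases r <;> fin_cases c <;>
          simp [halfTurn₂, Matrix.mul_apply, Fin.sum_univ_three])
    (by simp [halfTurn₂, Matrix.det_fin_three])
  have q₀ : Commutes L quarterTurn₀ := hL _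
    (by ext r c; fin_cases r <;> fin_cases c <;>
          simp [quarterTurn₀, Matrix.mul_apply, Fin.sum_univ_three])
    (by simp [quarterTurn₀, Matrix.det_fin_three])
  have q₂ : Commutes L quarterTurn₂ := hL _
    (by ext r c; fin_cases r <;> fin_cases c <;>
          simp [quarterTurn₂, Matrix.mul_apply, Fin.sum_univ_three])
    (by simp [quarterTurn₂, Matrix.det_fin_three])
  have hc : Commutes L axisCycle := hL _
    (by ext r c; fin_cases r <;> fin_cases c <;>
          simp [axisCycle, Matrix.mul_apply, Fin.sum_univ_three])
    (by simp [axisCycle, Matrix.det_fin_three])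
  have ht : Commutes L tilt := hL _
    (by ext r c; fin_cases r <;> fin_cases c <;>
          simp [tilt, Matrix.mul_apply, Fin.sum_univ_three] <;> norm_num)
    (by simp [tilt, Matrix.det_fin_three]; norm_num)
  obtain ⟨p, q, hd⟩ := map_unit_diag h₀ h₂ q₀
  obtain ⟨a, b, h01⟩ := map_unit_offDiag h₀ h₂
  have h10 := map_unit_one_zero q₂ h01
  have h12 : L (unit 1 2) = _ := map_unit_succ hc h01
  have h20 : L (unit 2 0) = _ := map_unit_succ hc h12
  have h21 : L (unit 2 1) = _ := map_unit_succ hc h10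
  have h02 : L (unit 0 2) = _ := map_unit_succ hc h21
  have h00 : L (unit 0 0) = q • 1 + (p - q) • unit 0 0 := by
    rw [hd]
    ext r c
    fin_cases r <;> fin_cases c <;> simp [unit_apply]
  have h11 : L (unit 1 1) = q • 1 + (p - q) • unit 1 1 := map_unit_diag_succ hc h00
  have h22 : L (unit 2 2) = q • 1 + (p - q) • unit 2 2 := map_unit_diag_succ hc h11
  have hp : p = q + (a + b) := diag_coeff_eq ht hd (by rw [h11]; simp [unit_apply]) h01 h10
  subst hp
  refine ⟨3 * q + a + b, a - b, a + b, fun P => ?_⟩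
  have key : L P = (q * P.trace) • 1 + a • P + b • Pᵀ := by
    conv_lhs => rw [sum_unit P]
    simp only [Fin.sum_univ_three, map_add, map_smul, h00, h01, h02, h10, h11, h12, h20, h21, h22]
    ext r c
    fin_cases r <;> fin_cases c <;> simp [unit_apply, Matrix.trace_fin_three] <;> ring
  rw [key]
  module
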